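/- Let ω be a radial weight. Then there exists an absolute constant C > 0 such that for every function f analytic on the unit disc 𝔻, ∫₀¹ M_∞(r,f)² · ω̂(r) dr ≤ C · ∫_𝔻 |f(z)|² ω(|z|) dA(z). -/

import Mathlib

open MeasureTheory Real Set Filter

noncomputable section

/-- `hatw v r = ∫_r^1 v(s) ds`. -/
def hatw (v : ℝ → ℝ) (r : ℝ) : ℝ := ∫ s in r..1, v s

/-- A radial weight: measurable, positive on `[0,1)`, integrable on `(0,1)`. -/
def RadialWeight (v : ℝ → ℝ) : Prop :=
  Measurable v ∧ (∀ r ∈ Set.Ico (0:ℝ) 1, 0 < v r) ∧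
    MeasureTheory.IntegrableOn v (Set.Ioo 0 1)

/-- Membership in the class `D̂`. -/
def DoublingD (v : ℝ → ℝ) : Prop :=
  ∃ C : ℝ, 1 ≤ C ∧ ∀ r ∈ Set.Ico (0:ℝ) 1, hatw v r ≤ C * hatw v ((1+r)/2)

/-- Squared Dirichlet-type norm `‖f‖_{D_v}^2`. -/
def DvSq (v : ℝ → ℝ) (f : ℂ → ℂ) : ENNReal :=
  (‖f 0‖₊ : ENNReal)^2 +
    (ENNReal.ofReal Real.pi)⁻¹ *
      ∫⁻ z in Metric.ball (0:ℂ) 1, (‖deriv f z‖₊ : ENNReal)^2 * ENNReal.ofReal (v ‖z‖)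

/-- The Muckenhoupt type quantity `M₁(v)`. -/
def M1v (v : ℝ → ℝ) : ENNReal :=
  ⨆ r ∈ Set.Ioo (0:ℝ) 1,
    (∫⁻ s in Set.Ioo r 1, ENNReal.ofReal (hatw v s / (1-s)^2)) ^ (1/2 : ℝ) *
    (∫⁻ s in Set.Ioo (0:ℝ) r, ENNReal.ofReal (1 / hatw v s)) ^ (1/2 : ℝ)

/-- The Muckenhoupt type quantity `M₂(v)`. -/
def M2v (v : ℝ → ℝ) : ENNReal :=
  ⨆ r ∈ Set.Ioo (0:ℝ) 1,
    (∫⁻ s in Set.Ioo (0:ℝ) r, ENNReal.ofReal (hatw v s / (1-s)^4)) ^ (1/2 : ℝ) *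
    (∫⁻ s in Set.Ioo r 1, ENNReal.ofReal ((1-s)^2 / hatw v s)) ^ (1/2 : ℝ)

/-- The moment `v_x = ∫_0^1 s^x v(s) ds`. -/
def vx (v : ℝ → ℝ) (x : ℕ) : ℝ := ∫ s in (0:ℝ)..1, s^x * v s

/-- `M_∞(s,f)`, the maximum of `|f|` on the circle of radius `s`. -/
def Minf (f : ℂ → ℂ) (s : ℝ) : ℝ := sSup ((fun z => ‖f z‖) '' Metric.sphere (0:ℂ) s)

/-- `M₂(r,h)`. -/
def M2mean (h : ℂ → ℂ) (r : ℝ) : ℝ :=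
  Real.sqrt ((2*Real.pi)⁻¹ * ∫ θ in (-Real.pi)..Real.pi, ‖h ((r:ℂ) * Complex.exp (θ * Complex.I))‖^2)

/-- The norm of `B(2,∞)` (with values in `[0,∞]`). -/
def B2infE (g : ℂ → ℂ) : ENNReal :=
  (‖g 0‖₊ : ENNReal) +
    ⨆ r ∈ Set.Ioo (0:ℝ) 1, ENNReal.ofReal (M2mean (deriv g) r * Real.sqrt (1-r))

/-- The `p`-th power of the norm of `B(2,p)` (with values in `[0,∞]`). -/
def B2pE (p : ℝ) (g : ℂ → ℂ) : ENNReal :=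
  ENNReal.ofReal (‖g 0‖ ^ p) +
    ∫⁻ r in Set.Ioo (0:ℝ) 1, ENNReal.ofReal (M2mean (deriv g) r ^ p * (1-r)^(p/2-1))

/-- The generalized Hilbert operator `H_g`. -/
def Hg (g f : ℂ → ℂ) (z : ℂ) : ℂ := ∫ t in Set.Ioo (0:ℝ) 1, f t * deriv g (t * z)

/-- The Hilbert operator `H` acting on functions on `[0,1)`. -/
def Hop (φ : ℝ → ℂ) (z : ℂ) : ℂ := ∫ t in Set.Ioo (0:ℝ) 1, φ t / (1 - t * z)

/-- The sublinear Hilbert operator `H̃`. -/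
def Htil (φ : ℝ → ℂ) (z : ℂ) : ℂ := ∫ t in Set.Ioo (0:ℝ) 1, (‖φ t‖ : ℂ) / (1 - t * z)

/-- Squared norm in `L²_{V̂₂}`. -/
def L2V2sq (v : ℝ → ℝ) (φ : ℝ → ℂ) : ENNReal :=
  ∫⁻ t in Set.Ioo (0:ℝ) 1, (‖φ t‖₊ : ENNReal)^2 * ENNReal.ofReal (hatw v t / (1-t)^2)

/-- Taylor coefficient `ĝ(k)` of `g` at the origin. -/
def gcoef (g : ℂ → ℂ) (k : ℕ) : ℂ := iteratedDeriv k g 0 / (Nat.factorial k)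

/-!
`M_∞(r, f)` is at most the majorant series `∑ |f̂(n)| rⁿ`. Squaring the
series and integrating over `(0, s)` produces Hilbert's matrix `1 / (n + m + 1)`, so Hilbert's
inequality and Parseval's identity give `∫₀ˢ (∑ |f̂(n)| rⁿ)² dr ≤ 8 s M₂(s, f)²`. Integrating this
against `ω(s) ds` and exchanging the order of integration on the left turns the weight into `ω̂(r)`,
while on the right polar coordinates give `2 ∫₀¹ s ω(s) M₂(s, f)² ds = ‖f‖²_{A²_ω}`.
-/

open scoped ENNReal

/-! ### Hilbert's inequality -/

lemma two_mul_le_mul_sq_add_inv_mul_sq {ε : ℝ≥0∞} (hε₀ : ε ≠ 0) (hε : ε ≠ ∞) (a b : ℝ≥0∞) :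
    2 * a * b ≤ ε * a ^ 2 + ε⁻¹ * b ^ 2 := by
  rcases eq_or_ne a ∞ with rfl | ha
  · simp [ENNReal.mul_top hε₀]
  rcases eq_or_ne b ∞ with rfl | hb
  · simp [ENNReal.mul_top (ENNReal.inv_ne_zero.2 hε)]
  lift ε to NNReal using hε
  lift a to NNReal using ha
  lift b to NNReal using hb
  have hε_pos : 0 < ε := pos_iff_ne_zero.2 (by exact_mod_cast hε₀)
  rw [← ENNReal.coe_inv hε_pos.ne']
  exact_mod_cast two_mul_le_add_mul_sq (a := (a : ℝ)) (b := b) (NNReal.coe_pos.2 hε_pos)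

theorem schur_test {ι : Type*} {K : ι → ι → ℝ≥0∞}
    (hK : ∀ i j, K i j = K j i) {w : ι → ℝ≥0∞} (hw₀ : ∀ i, w i ≠ 0) (hw : ∀ i, w i ≠ ∞)
    {A : ℝ≥0∞} (hA : ∀ i, ∑' j, K i j * w j ≤ A * w i) (x : ι → ℝ≥0∞) :
    ∑' i, ∑' j, K i j * (x i * x j) ≤ A * ∑' i, x i ^ 2 := by
  set T : ι → ι → ℝ≥0∞ := fun i j ↦ K i j * w j * ((w i)⁻¹ * x i ^ 2)
  have term_le (i j : ι) : 2 * (K i j * (x i * x j)) ≤ T i j + T j i := by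
    have hε₀ : w j * (w i)⁻¹ ≠ 0 := mul_ne_zero (hw₀ j) (ENNReal.inv_ne_zero.2 (hw i))
    have hε : w j * (w i)⁻¹ ≠ ∞ := ENNReal.mul_ne_top (hw j) (ENNReal.inv_ne_top.2 (hw₀ i))
    have h_inv : (w j * (w i)⁻¹)⁻¹ = w i * (w j)⁻¹ := by
      rw [ENNReal.mul_inv (.inl (hw₀ j)) (.inl (hw j)), inv_inv, mul_comm]
    calc 2 * (K i j * (x i * x j)) = K i j * (2 * x i * x j) := by ring
      _ ≤ K i j * (w j * (w i)⁻¹ * x i ^ 2 + w i * (w j)⁻¹ * x j ^ 2) := by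
          gcongr
          exact h_inv ▸ two_mul_le_mul_sq_add_inv_mul_sq hε₀ hε (x i) (x j)
      _ = K i j * w j * ((w i)⁻¹ * x i ^ 2) + K i j * w i * ((w j)⁻¹ * x j ^ 2) := by ring
      _ = T i j + T j i := by simp only [T, hK i j]
  have sum_le : ∑' i, ∑' j, T i j ≤ A * ∑' i, x i ^ 2 := by
    rw [← ENNReal.tsum_mul_left]
    refine ENNReal.tsum_le_tsum fun i ↦ ?_
    calc ∑' j, T i j = (∑' j, K i j * w j) * ((w i)⁻¹ * x i ^ 2) := ENNReal.tsum_mul_right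
      _ ≤ A * w i * ((w i)⁻¹ * x i ^ 2) := by gcongr; exact hA i
      _ = A * (w i * (w i)⁻¹) * x i ^ 2 := by ring
      _ = A * x i ^ 2 := by rw [ENNReal.mul_inv_cancel (hw₀ i) (hw i), mul_one]
  refine (ENNReal.mul_le_mul_iff_right two_ne_zero ENNReal.ofNat_ne_top).1 ?_
  calc 2 * ∑' i, ∑' j, K i j * (x i * x j)
      = ∑' i, ∑' j, 2 * (K i j * (x i * x j)) := by simp_rw [ENNReal.tsum_mul_left]
    _ ≤ ∑' i, ∑' j, (T i j + T j i) :=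
        ENNReal.tsum_le_tsum fun i ↦ ENNReal.tsum_le_tsum fun j ↦ term_le i j
    _ = ∑' i, ∑' j, T i j + ∑' i, ∑' j, T i j := by
        simp_rw [ENNReal.tsum_add]
        rw [ENNReal.tsum_comm (f := fun i j ↦ T j i)]
    _ ≤ 2 * (A * ∑' i, x i ^ 2) := by rw [two_mul]; gcongr

-- With `c = √(n + 1)`, the function `c⁻¹ √t / (√t + c)` is bounded by `c⁻¹` and has derivative
-- `1 / (2 √t (√t + c)²)`, comparable at `t = m + 1` with the left-hand side: hence its increments.
lemma inv_mul_inv_sqrt_le (n m : ℕ) :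
    ((n + m + 1 : ℕ) : ℝ)⁻¹ * (√(m + 1))⁻¹ ≤
      8 * (√(n + 1))⁻¹ * (√(m + 1) / (√(m + 1) + √(n + 1)) - √m / (√m + √(n + 1))) := by
  have ha : √(m : ℝ) ^ 2 = m := Real.sq_sqrt (by positivity)
  have hb : √((m : ℝ) + 1) ^ 2 = m + 1 := Real.sq_sqrt (by positivity)
  have hc : √((n : ℝ) + 1) ^ 2 = n + 1 := Real.sq_sqrt (by positivity)
  have ha₀ : 0 ≤ √(m : ℝ) := Real.sqrt_nonneg _
  have hb₀ : 0 < √((m : ℝ) + 1) := by positivity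
  have hc₀ : 0 < √((n : ℝ) + 1) := by positivity
  have hab : √(m : ℝ) ≤ √((m : ℝ) + 1) := Real.sqrt_le_sqrt (by linarith)
  have hN : ((n + m + 1 : ℕ) : ℝ) = n + m + 1 := by push_cast; ring
  set a := √(m : ℝ)
  set b := √((m : ℝ) + 1)
  set c := √((n : ℝ) + 1)
  have sub_eq : b / (b + c) - a / (a + c) = c / ((a + b) * ((a + c) * (b + c))) := by
    have h_sub : b - a = (a + b)⁻¹ := eq_inv_of_mul_eq_one_left (by linear_combination hb - ha)
    calc b / (b + c) - a / (a + c) = c * (b - a) / ((a + c) * (b + c)) := by field_simp; ring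
      _ = c / ((a + b) * ((a + c) * (b + c))) := by rw [h_sub]; field_simp
  have denom_le : (a + b) * ((a + c) * (b + c)) ≤ 8 * ((n + m + 1) * b) :=
    have h_sq : (b + c) * (b + c) ≤ 4 * (n + m + 1) :=
      calc (b + c) * (b + c) ≤ 2 * (b ^ 2 + c ^ 2) := by linarith [sq_nonneg (b - c)]
        _ ≤ 4 * (n + m + 1) := by
          rw [hb, hc]
          linarith [(n.cast_nonneg : (0 : ℝ) ≤ n), (m.cast_nonneg : (0 : ℝ) ≤ m)]
    calc (a + b) * ((a + c) * (b + c)) ≤ (b + b) * ((b + c) * (b + c)) := by gcongr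
      _ ≤ (b + b) * (4 * (n + m + 1)) := by gcongr
      _ = 8 * ((n + m + 1) * b) := by ring
  calc ((n + m + 1 : ℕ) : ℝ)⁻¹ * b⁻¹ = 8 / (8 * ((n + m + 1) * b)) := by
        rw [hN]; field_simp
    _ ≤ 8 / ((a + b) * ((a + c) * (b + c))) := by gcongr
    _ = 8 * c⁻¹ * (b / (b + c) - a / (a + c)) := by rw [sub_eq]; field_simp

lemma tsum_inv_mul_inv_sqrt_le (n : ℕ) :
    ∑' m : ℕ, ((n + m + 1 : ℕ) : ℝ≥0∞)⁻¹ * ENNReal.ofReal (√(m + 1))⁻¹ ≤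
      8 * ENNReal.ofReal (√(n + 1))⁻¹ := by
  have term_eq (m : ℕ) : ((n + m + 1 : ℕ) : ℝ≥0∞)⁻¹ * ENNReal.ofReal (√(m + 1))⁻¹ =
      ENNReal.ofReal (((n + m + 1 : ℕ) : ℝ)⁻¹ * (√(m + 1))⁻¹) := by
    rw [ENNReal.ofReal_mul (by positivity), ENNReal.ofReal_inv_of_pos (x := (n + m + 1 : ℕ))
      (by positivity), ENNReal.ofReal_natCast]
  refine ENNReal.tsum_le_of_sum_range_le fun N ↦ ?_
  simp_rw [term_eq]
  rw [← ENNReal.ofReal_sum_of_nonneg fun m _ ↦ by positivity, ← ENNReal.ofReal_ofNat 8,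
    ← ENNReal.ofReal_mul (by norm_num)]
  refine ENNReal.ofReal_le_ofReal ?_
  have telescope := Finset.sum_range_sub (fun m : ℕ ↦ √(m : ℝ) / (√m + √(n + 1))) N
  simp only [Nat.cast_add, Nat.cast_one, Nat.cast_zero, Real.sqrt_zero, zero_div, sub_zero]
    at telescope
  calc ∑ m ∈ Finset.range N, ((n + m + 1 : ℕ) : ℝ)⁻¹ * (√(m + 1))⁻¹
      ≤ ∑ m ∈ Finset.range N,
        8 * (√(n + 1))⁻¹ * (√(m + 1) / (√(m + 1) + √(n + 1)) - √m / (√m + √(n + 1))) :=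
        Finset.sum_le_sum fun m _ ↦ inv_mul_inv_sqrt_le n m
    _ = 8 * (√(n + 1))⁻¹ * (√N / (√N + √(n + 1))) := by rw [← Finset.mul_sum, telescope]
    _ ≤ 8 * (√(n + 1))⁻¹ := by
        refine mul_le_of_le_one_right (by positivity) (div_le_one_of_le₀ ?_ (by positivity))
        exact le_add_of_nonneg_right (Real.sqrt_nonneg _)

theorem hilbert_inequality (x : ℕ → ℝ≥0∞) :
    ∑' n, ∑' m, ((n + m + 1 : ℕ) : ℝ≥0∞)⁻¹ * (x n * x m) ≤ 8 * ∑' n, x n ^ 2 :=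
  schur_test (fun n m ↦ by rw [add_comm n m]) (w := fun n : ℕ ↦ ENNReal.ofReal (√(n + 1))⁻¹)
    (fun n ↦ (ENNReal.ofReal_pos.2 (by positivity)).ne') (fun _ ↦ ENNReal.ofReal_ne_top)
    tsum_inv_mul_inv_sqrt_le x

lemma lintegral_Ioo_ofReal_pow (s : ℝ) (k : ℕ) :
    ∫⁻ r in Ioo 0 s, ENNReal.ofReal r ^ k =
      ((k + 1 : ℕ) : ℝ≥0∞)⁻¹ * ENNReal.ofReal s ^ (k + 1) := by
  rcases le_or_gt s 0 with hs | hs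
  · simp [Ioo_eq_empty hs.not_gt, ENNReal.ofReal_of_nonpos hs]
  have integrable_pow : IntegrableOn (fun r : ℝ ↦ r ^ k) (Ioo 0 s) :=
    (continuous_pow k).integrableOn_Icc.mono_set Ioo_subset_Icc_self
  have pow_nonneg_ae : ∀ᵐ r ∂volume.restrict (Ioo 0 s), 0 ≤ r ^ k :=
    (ae_restrict_mem measurableSet_Ioo).mono fun r hr ↦ pow_nonneg hr.1.le k
  calc ∫⁻ r in Ioo 0 s, ENNReal.ofReal r ^ k
      = ∫⁻ r in Ioo 0 s, ENNReal.ofReal (r ^ k) :=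
        setLIntegral_congr_fun measurableSet_Ioo fun r hr ↦ (ENNReal.ofReal_pow hr.1.le k).symm
    _ = ENNReal.ofReal (∫ r in 0..s, r ^ k) := by
        rw [intervalIntegral.integral_of_le hs.le, integral_Ioc_eq_integral_Ioo,
          ofReal_integral_eq_lintegral_ofReal integrable_pow pow_nonneg_ae]
    _ = ENNReal.ofReal (((k + 1 : ℕ) : ℝ)⁻¹ * s ^ (k + 1)) := by
        rw [integral_pow]; rw [zero_pow k.succ_ne_zero]; push_cast; ring_nf
    _ = ((k + 1 : ℕ) : ℝ≥0∞)⁻¹ * ENNReal.ofReal s ^ (k + 1) := by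
        rw [ENNReal.ofReal_mul (by positivity), ENNReal.ofReal_inv_of_pos (by positivity),
          ENNReal.ofReal_natCast, ENNReal.ofReal_pow hs.le]

theorem lintegral_sq_tsum_mul_pow_le (b : ℕ → ℝ≥0∞) (s : ℝ) :
    ∫⁻ r in Ioo 0 s, (∑' n, b n * ENNReal.ofReal r ^ n) ^ 2 ≤
      8 * ENNReal.ofReal s * ∑' n, (b n * ENNReal.ofReal s ^ n) ^ 2 := by
  have sq_eq (r : ℝ) : (∑' n, b n * ENNReal.ofReal r ^ n) ^ 2 =
      ∑' n, ∑' m, b n * b m * ENNReal.ofReal r ^ (n + m) := by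
    simp_rw [sq, ← ENNReal.tsum_mul_right, ← ENNReal.tsum_mul_left]
    exact tsum_congr fun n ↦ tsum_congr fun m ↦ by ring
  have term_eq (n m : ℕ) : ∫⁻ r in Ioo 0 s, b n * b m * ENNReal.ofReal r ^ (n + m) =
      ENNReal.ofReal s * (((n + m + 1 : ℕ) : ℝ≥0∞)⁻¹ *
        (b n * ENNReal.ofReal s ^ n * (b m * ENNReal.ofReal s ^ m))) := by
    rw [lintegral_const_mul _ (by fun_prop), lintegral_Ioo_ofReal_pow]
    ring
  calc ∫⁻ r in Ioo 0 s, (∑' n, b n * ENNReal.ofReal r ^ n) ^ 2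
      = ∑' n, ∑' m, ∫⁻ r in Ioo 0 s, b n * b m * ENNReal.ofReal r ^ (n + m) := by
        simp_rw [sq_eq]
        rw [lintegral_tsum fun n ↦ by fun_prop]
        exact tsum_congr fun n ↦ lintegral_tsum fun m ↦ by fun_prop
    _ = ENNReal.ofReal s * ∑' n, ∑' m, ((n + m + 1 : ℕ) : ℝ≥0∞)⁻¹ *
          (b n * ENNReal.ofReal s ^ n * (b m * ENNReal.ofReal s ^ m)) := by
        simp_rw [term_eq, ENNReal.tsum_mul_left]
    _ ≤ ENNReal.ofReal s * (8 * ∑' n, (b n * ENNReal.ofReal s ^ n) ^ 2) := by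
        gcongr
        exact hilbert_inequality fun n ↦ b n * ENNReal.ofReal s ^ n
    _ = 8 * ENNReal.ofReal s * ∑' n, (b n * ENNReal.ofReal s ^ n) ^ 2 := by ring

/-! ### Power series on circles -/

/-- The majorant series `∑ |f̂(n)| rⁿ` of the Taylor series of `f` at the origin. -/
def taylorMajorant (f : ℂ → ℂ) (r : ℝ) : ℝ≥0∞ := ∑' n, ‖gcoef f n‖ₑ * ENNReal.ofReal r ^ n

lemma measurable_taylorMajorant (f : ℂ → ℂ) : Measurable (taylorMajorant f) :=
  Measurable.tsum fun n ↦ by fun_prop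

lemma enorm_le_taylorMajorant {f : ℂ → ℂ} {R : ℝ} (hf : DifferentiableOn ℂ f (Metric.ball 0 R))
    {z : ℂ} (hz : z ∈ Metric.ball 0 R) : ‖f z‖ₑ ≤ taylorMajorant f ‖z‖ := by
  rw [← (Complex.hasSum_taylorSeries_on_ball hf hz).tsum_eq]
  refine enorm_tsum_le_tsum_enorm.trans_eq (tsum_congr fun n ↦ ?_)
  rw [gcoef, ofReal_norm, ← enorm_pow, ← enorm_mul]
  congr 1
  simp only [smul_eq_mul, sub_zero]
  ring

lemma Minf_nonneg (f : ℂ → ℂ) (r : ℝ) : 0 ≤ Minf f r :=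
  Real.sSup_nonneg (by rintro _ ⟨z, -, rfl⟩; exact norm_nonneg _)

lemma ofReal_Minf_le_taylorMajorant {f : ℂ → ℂ} {R : ℝ}
    (hf : DifferentiableOn ℂ f (Metric.ball 0 R)) {r : ℝ} (hr : r < R) :
    ENNReal.ofReal (Minf f r) ≤ taylorMajorant f r := by
  rcases eq_or_ne (taylorMajorant f r) ∞ with h_top | h_top
  · exact h_top ▸ le_top
  refine ENNReal.ofReal_le_of_le_toReal (Real.sSup_le ?_ ENNReal.toReal_nonneg)
  rintro _ ⟨z, hz, rfl⟩
  obtain rfl : ‖z‖ = r := by simpa using hz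
  rw [← ENNReal.ofReal_le_iff_le_toReal h_top, ofReal_norm]
  exact enorm_le_taylorMajorant hf (by simpa using hr)

lemma M2mean_sq (h : ℂ → ℂ) (r : ℝ) :
    M2mean h r ^ 2 = (2 * π)⁻¹ * ∫ θ in (-π)..π, ‖h (circleMap 0 r θ)‖ ^ 2 := by
  simp only [circleMap, zero_add]
  exact Real.sq_sqrt <| mul_nonneg (by positivity) <|
    intervalIntegral.integral_nonneg (by linarith [pi_pos]) fun _ _ ↦ by positivity

lemma M2mean_sq_eq_circleAverage (h : ℂ → ℂ) (r : ℝ) :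
    M2mean h r ^ 2 = circleAverage (fun z ↦ ‖h z‖ ^ 2) 0 r := by
  have periodic : Function.Periodic (fun θ ↦ ‖h (circleMap 0 r θ)‖ ^ 2) (2 * π) :=
    (periodic_circleMap 0 r).comp fun z ↦ ‖h z‖ ^ 2
  have shift := periodic.intervalIntegral_add_eq (-π) 0
  rw [show -π + 2 * π = π by ring, zero_add] at shift
  rw [circleAverage_def, ← shift, M2mean_sq, smul_eq_mul]

lemma fourierCoeffOn_circleMap {f : ℂ → ℂ} {s : ℝ} (hs : 0 < s)
    (hf : DifferentiableOn ℂ f (Metric.closedBall 0 s)) (n : ℕ) :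
    fourierCoeffOn two_pi_pos (fun θ ↦ f (circleMap 0 s θ)) n = gcoef f n * s ^ n := by
  have hs₀ : (s : ℂ) ≠ 0 := by exact_mod_cast hs.ne'
  have fourier_eq (θ : ℝ) : fourier (-(n : ℤ)) (θ : AddCircle (2 * π - 0)) =
      (Complex.exp (θ * Complex.I) ^ n)⁻¹ := by
    rw [fourier_coe_apply, ← Complex.exp_nat_mul, ← Complex.exp_neg]
    congr 1
    push_cast
    field_simp
    ring
  have integrand_eq (θ : ℝ) :
      fourier (-(n : ℤ)) (θ : AddCircle (2 * π - 0)) • f (circleMap 0 s θ) =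
      s ^ n / Complex.I * (deriv (circleMap 0 s) θ •
        (1 / (circleMap 0 s θ - 0) ^ (n + 1)) • f (circleMap 0 s θ)) := by
    simp only [fourier_eq, deriv_circleMap, circleMap, zero_add, sub_zero, smul_eq_mul]
    field_simp
    ring
  have cauchy := hf.circleIntegral_one_div_sub_center_pow_smul hs n
  rw [circleIntegral] at cauchy
  rw [fourierCoeffOn_eq_integral]
  simp_rw [integrand_eq]
  rw [intervalIntegral.integral_const_mul, cauchy, gcoef, Complex.real_smul, smul_eq_mul]
  push_cast
  field_simp
  simp

theorem tsum_sq_gcoef_mul_pow_le {f : ℂ → ℂ} {s : ℝ} (hs : 0 < s)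
    (hf : DifferentiableOn ℂ f (Metric.closedBall 0 s)) :
    ∑' n, (‖gcoef f n‖ₑ * ENNReal.ofReal s ^ n) ^ 2 ≤ ENNReal.ofReal (M2mean f s ^ 2) := by
  set g : ℝ → ℂ := fun θ ↦ f (circleMap 0 s θ)
  have hg : Continuous g := hf.continuousOn.comp_continuous (continuous_circleMap 0 s)
    fun θ ↦ circleMap_mem_closedBall 0 hs.le θ
  have hg_memLp : MemLp g 2 (volume.restrict (Ioc 0 (2 * π))) := by
    rw [memLp_two_iff_integrable_sq_norm hg.aestronglyMeasurable]
    exact (hg.norm.pow 2).integrableOn_Icc.mono_set Ioc_subset_Icc_self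
  have enorm_s : ‖(s : ℂ)‖ₑ = ENNReal.ofReal s := by
    rw [← ofReal_norm, Complex.norm_real, Real.norm_of_nonneg hs.le]
  have parseval := hasSum_sq_fourierCoeffOn two_pi_pos hg_memLp
  calc ∑' n : ℕ, (‖gcoef f n‖ₑ * ENNReal.ofReal s ^ n) ^ 2
      = ∑' n : ℕ, ENNReal.ofReal (‖fourierCoeffOn two_pi_pos g n‖ ^ 2) := by
        refine tsum_congr fun n ↦ ?_
        rw [fourierCoeffOn_circleMap hs hf, ENNReal.ofReal_pow (norm_nonneg _), ofReal_norm,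
          enorm_mul, enorm_pow, enorm_s]
    _ ≤ ∑' k : ℤ, ENNReal.ofReal (‖fourierCoeffOn two_pi_pos g k‖ ^ 2) :=
        ENNReal.tsum_comp_le_tsum_of_injective Nat.cast_injective _
    _ = ENNReal.ofReal (M2mean f s ^ 2) := by
        rw [← ENNReal.ofReal_tsum_of_nonneg (fun _ ↦ by positivity) parseval.summable,
          parseval.tsum_eq, sub_zero, M2mean_sq_eq_circleAverage, circleAverage_def]

theorem lintegral_sq_taylorMajorant_le {f : ℂ → ℂ} {s : ℝ} (hs : 0 < s)
    (hf : DifferentiableOn ℂ f (Metric.closedBall 0 s)) :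
    ∫⁻ r in Ioo 0 s, taylorMajorant f r ^ 2 ≤
      8 * ENNReal.ofReal s * ENNReal.ofReal (M2mean f s ^ 2) :=
  (lintegral_sq_tsum_mul_pow_le _ s).trans <| by gcongr; exact tsum_sq_gcoef_mul_pow_le hs hf

/-! ### Integration in polar coordinates and over triangles -/

lemma lintegral_ball_eq_setLIntegral_circleMap (F : ℂ → ℝ≥0∞) (R : ℝ) :
    ∫⁻ z in Metric.ball 0 R, F z =
      ∫⁻ p in Ioo 0 R ×ˢ Ioo (-π) π, ENNReal.ofReal p.1 * F (circleMap 0 p.1 p.2) := by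
  set S : Set (ℝ × ℝ) := Ioo 0 R ×ˢ Ioo (-π) π
  set G : ℝ × ℝ → ℝ≥0∞ := fun p ↦ ENNReal.ofReal p.1 * F (circleMap 0 p.1 p.2)
  have hS : MeasurableSet S := measurableSet_Ioo.prod measurableSet_Ioo
  have hS_subset : S ⊆ polarCoord.target := prod_mono Ioo_subset_Ioi_self le_rfl
  have indicator_eq : ∀ p ∈ polarCoord.target, ENNReal.ofReal p.1 •
      (Metric.ball 0 R).indicator F (Complex.polarCoord.symm p) = S.indicator G p := by
    rintro ⟨s, θ⟩ ⟨hs : 0 < s, hθ : θ ∈ Ioo (-π) π⟩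
    have symm_eq : Complex.polarCoord.symm (s, θ) = circleMap 0 s θ := by
      simp [Complex.polarCoord_symm_apply, circleMap, Complex.exp_mul_I]
    have mem_ball_iff : circleMap 0 s θ ∈ Metric.ball 0 R ↔ (s, θ) ∈ S := by
      simp [S, abs_of_pos hs, hs, hθ.1, hθ.2]
    rw [symm_eq]
    by_cases h : (s, θ) ∈ S
    · rw [indicator_of_mem h, indicator_of_mem (mem_ball_iff.2 h), smul_eq_mul]
    · rw [indicator_of_notMem h, indicator_of_notMem (mem_ball_iff.not.2 h), smul_zero]
  calc ∫⁻ z in Metric.ball 0 R, F z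
      = ∫⁻ p in polarCoord.target, S.indicator G p := by
        rw [← lintegral_indicator measurableSet_ball, ← Complex.lintegral_comp_polarCoord_symm]
        exact setLIntegral_congr_fun polarCoord.open_target.measurableSet indicator_eq
    _ = ∫⁻ p in S, G p := by rw [setLIntegral_indicator hS, inter_eq_left.2 hS_subset]

lemma lintegral_ball_mul_comp_norm {g : ℂ → ℝ≥0∞} {w : ℝ → ℝ≥0∞} {R : ℝ}
    (hg : ContinuousOn g (Metric.ball 0 R)) (hw : Measurable w) :
    ∫⁻ z in Metric.ball 0 R, g z * w ‖z‖ =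
      ∫⁻ s in Ioo 0 R, ENNReal.ofReal s * w s * ∫⁻ θ in Ioo (-π) π, g (circleMap 0 s θ) := by
  set S : Set (ℝ × ℝ) := Ioo 0 R ×ˢ Ioo (-π) π
  set G : ℝ × ℝ → ℝ≥0∞ := fun p ↦ ENNReal.ofReal p.1 * w p.1 * g (circleMap 0 p.1 p.2)
  have hS : MeasurableSet S := measurableSet_Ioo.prod measurableSet_Ioo
  have mem_ball {s : ℝ} (hs : s ∈ Ioo 0 R) (θ : ℝ) : circleMap 0 s θ ∈ Metric.ball 0 R := by
    simpa [abs_of_pos hs.1] using hs.2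
  have hG : AEMeasurable G (volume.restrict S) := by
    have circleMap_continuous : Continuous fun p : ℝ × ℝ ↦ circleMap 0 p.1 p.2 := by
      unfold circleMap; fun_prop
    have comp_continuousOn : ContinuousOn (fun p : ℝ × ℝ ↦ g (circleMap 0 p.1 p.2)) S :=
      hg.comp circleMap_continuous.continuousOn fun p hp ↦ mem_ball hp.1 p.2
    exact (by fun_prop : Measurable fun p : ℝ × ℝ ↦ ENNReal.ofReal p.1 * w p.1).aemeasurable.mul
      (comp_continuousOn.aemeasurable hS)
  calc ∫⁻ z in Metric.ball 0 R, g z * w ‖z‖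
      = ∫⁻ p in S, G p := by
        rw [lintegral_ball_eq_setLIntegral_circleMap]
        refine setLIntegral_congr_fun hS fun p hp ↦ ?_
        simp only [norm_circleMap_zero, abs_of_pos hp.1.1, G]
        ring
    _ = ∫⁻ s in Ioo 0 R, ∫⁻ θ in Ioo (-π) π, G (s, θ) := setLIntegral_prod G hG
    _ = ∫⁻ s in Ioo 0 R, ENNReal.ofReal s * w s * ∫⁻ θ in Ioo (-π) π, g (circleMap 0 s θ) := by
        refine setLIntegral_congr_fun measurableSet_Ioo fun s hs ↦ ?_
        have g_continuous : Continuous fun θ ↦ g (circleMap 0 s θ) :=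
          hg.comp_continuous (continuous_circleMap 0 s) (mem_ball hs)
        simp only [G, lintegral_const_mul _ g_continuous.measurable]

lemma ofReal_M2mean_sq {h : ℂ → ℂ} {s : ℝ} (hs : 0 ≤ s)
    (hh : ContinuousOn h (Metric.sphere 0 s)) :
    ENNReal.ofReal (M2mean h s ^ 2) =
      (ENNReal.ofReal (2 * π))⁻¹ * ∫⁻ θ in Ioo (-π) π, ‖h (circleMap 0 s θ)‖ₑ ^ 2 := by
  have hc : Continuous fun θ ↦ ‖h (circleMap 0 s θ)‖ ^ 2 :=
    (hh.comp_continuous (continuous_circleMap 0 s) (circleMap_mem_sphere 0 hs)).norm.pow 2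
  have hπ : -π ≤ π := by linarith [pi_pos]
  rw [M2mean_sq, ENNReal.ofReal_mul (by positivity), ENNReal.ofReal_inv_of_pos two_pi_pos,
    intervalIntegral.integral_of_le hπ, integral_Ioc_eq_integral_Ioo,
    ofReal_integral_eq_lintegral_ofReal
      (hc.integrableOn_Icc.mono_set Ioo_subset_Icc_self) (.of_forall fun _ ↦ by positivity)]
  simp_rw [ENNReal.ofReal_pow (norm_nonneg _), ofReal_norm]

theorem inv_pi_mul_lintegral_ball_sq_enorm_mul {f : ℂ → ℂ} {w : ℝ → ℝ≥0∞} {R : ℝ}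
    (hf : ContinuousOn f (Metric.ball 0 R)) (hw : Measurable w) :
    (ENNReal.ofReal π)⁻¹ * ∫⁻ z in Metric.ball 0 R, ‖f z‖ₑ ^ 2 * w ‖z‖ =
      2 * ∫⁻ s in Ioo 0 R, ENNReal.ofReal s * w s * ENNReal.ofReal (M2mean f s ^ 2) := by
  have hπ : (ENNReal.ofReal π)⁻¹ ≠ ∞ := ENNReal.inv_ne_top.2 (ENNReal.ofReal_pos.2 pi_pos).ne'
  have inv_pi : (ENNReal.ofReal π)⁻¹ = 2 * (ENNReal.ofReal (2 * π))⁻¹ := by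
    rw [ENNReal.ofReal_mul zero_le_two, ENNReal.ofReal_ofNat,
      ENNReal.mul_inv (.inl two_ne_zero) (.inl ENNReal.ofNat_ne_top), ← mul_assoc,
      ENNReal.mul_inv_cancel two_ne_zero ENNReal.ofNat_ne_top, one_mul]
  have sq_continuousOn : ContinuousOn (fun z ↦ ‖f z‖ₑ ^ 2) (Metric.ball 0 R) :=
    (ENNReal.continuous_pow 2).comp_continuousOn hf.enorm
  rw [lintegral_ball_mul_comp_norm sq_continuousOn hw, ← lintegral_const_mul' _ _ hπ,
    ← lintegral_const_mul' _ _ ENNReal.ofNat_ne_top]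
  refine setLIntegral_congr_fun measurableSet_Ioo fun s hs ↦ ?_
  have sphere_subset : Metric.sphere (0 : ℂ) s ⊆ Metric.ball 0 R :=
    Metric.sphere_subset_closedBall.trans (Metric.closedBall_subset_ball hs.2)
  simp only [ofReal_M2mean_sq hs.1.le (hf.mono sphere_subset), inv_pi]
  ring

lemma lintegral_Ioo_lintegral_Ioo_swap {α : Type*} [LinearOrder α] [TopologicalSpace α]
    [OrderClosedTopology α] [SecondCountableTopology α] [MeasurableSpace α]
    [OpensMeasurableSpace α] {μ ν : Measure α} [SFinite μ] [SFinite ν] {F : α → α → ℝ≥0∞}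
    (hF : Measurable (Function.uncurry F)) (a b : α) :
    ∫⁻ r in Ioo a b, ∫⁻ s in Ioo r b, F r s ∂ν ∂μ =
      ∫⁻ s in Ioo a b, ∫⁻ r in Ioo a s, F r s ∂μ ∂ν := by
  have h_meas : Measurable (Function.uncurry fun r s ↦ (Ioi r).indicator (F r) s) :=
    hF.indicator (measurableSet_lt measurable_fst measurable_snd)
  calc ∫⁻ r in Ioo a b, ∫⁻ s in Ioo r b, F r s ∂ν ∂μ
      = ∫⁻ r in Ioo a b, ∫⁻ s in Ioo a b, (Ioi r).indicator (F r) s ∂ν ∂μ := by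
        refine setLIntegral_congr_fun measurableSet_Ioo fun r hr ↦ ?_
        simp only [setLIntegral_indicator measurableSet_Ioi, Ioi_inter_Ioo, max_eq_left hr.1.le]
    _ = ∫⁻ s in Ioo a b, ∫⁻ r in Ioo a b, (Iio s).indicator (F · s) r ∂μ ∂ν :=
        lintegral_lintegral_swap h_meas.aemeasurable
    _ = ∫⁻ s in Ioo a b, ∫⁻ r in Ioo a s, F r s ∂μ ∂ν := by
        refine setLIntegral_congr_fun measurableSet_Ioo fun s hs ↦ ?_
        simp only [setLIntegral_indicator measurableSet_Iio, Iio_inter_Ioo, min_eq_left hs.2.le]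

lemma ofReal_hatw {v : ℝ → ℝ} (hv : RadialWeight v) {r : ℝ} (hr : r ∈ Icc 0 1) :
    ENNReal.ofReal (hatw v r) = ∫⁻ s in Ioo r 1, ENNReal.ofReal (v s) := by
  obtain ⟨-, v_pos, v_integrable⟩ := hv
  rw [hatw, intervalIntegral.integral_of_le hr.2, integral_Ioc_eq_integral_Ioo,
    ofReal_integral_eq_lintegral_ofReal (v_integrable.mono_set (Ioo_subset_Ioo_left hr.1))]
  exact (ae_restrict_mem measurableSet_Ioo).mono fun s hs ↦
    (v_pos s ⟨hr.1.trans hs.1.le, hs.2⟩).le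

/-- for every radial weight `ω`,
`∫_0^1 M_∞(r,f)² ω̂(r) dr ≤ C ‖f‖²_{A²_ω}` with an absolute constant `C`. -/
theorem statement2 :
    ∃ C : ℝ, 0 < C ∧ ∀ v : ℝ → ℝ, RadialWeight v →
      ∀ f : ℂ → ℂ, DifferentiableOn ℂ f (Metric.ball 0 1) →
        ∫⁻ r in Set.Ioo (0:ℝ) 1, ENNReal.ofReal (Minf f r ^ 2 * hatw v r) ≤
          ENNReal.ofReal C * ((ENNReal.ofReal Real.pi)⁻¹ *
            ∫⁻ z in Metric.ball (0:ℂ) 1, (‖f z‖₊ : ENNReal)^2 * ENNReal.ofReal (v ‖z‖)) := by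
  refine ⟨4, by norm_num, fun v hv f hf ↦ ?_⟩
  have hv_meas : Measurable fun s ↦ ENNReal.ofReal (v s) := hv.1.ennreal_ofReal
  have hP := measurable_taylorMajorant f
  calc ∫⁻ r in Ioo 0 1, ENNReal.ofReal (Minf f r ^ 2 * hatw v r)
      ≤ ∫⁻ r in Ioo 0 1, ∫⁻ s in Ioo r 1, taylorMajorant f r ^ 2 * ENNReal.ofReal (v s) := by
        refine setLIntegral_mono' measurableSet_Ioo fun r hr ↦ ?_
        rw [lintegral_const_mul _ hv_meas, ENNReal.ofReal_mul (sq_nonneg _),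
          ENNReal.ofReal_pow (Minf_nonneg f r), ofReal_hatw hv (Ioo_subset_Icc_self hr)]
        gcongr
        exact ofReal_Minf_le_taylorMajorant hf hr.2
    _ = ∫⁻ s in Ioo 0 1, ∫⁻ r in Ioo 0 s, taylorMajorant f r ^ 2 * ENNReal.ofReal (v s) :=
        lintegral_Ioo_lintegral_Ioo_swap
          (((hP.pow_const 2).comp measurable_fst).mul (hv_meas.comp measurable_snd)) 0 1
    _ ≤ ∫⁻ s in Ioo 0 1,
          8 * (ENNReal.ofReal s * ENNReal.ofReal (v s) * ENNReal.ofReal (M2mean f s ^ 2)) := by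
        refine setLIntegral_mono' measurableSet_Ioo fun s hs ↦ ?_
        rw [lintegral_mul_const _ (hP.pow_const 2)]
        refine (mul_le_mul_left (lintegral_sq_taylorMajorant_le hs.1
          (hf.mono (Metric.closedBall_subset_ball hs.2))) _).trans_eq (by ring)
    _ = _ := by
        rw [lintegral_const_mul' _ _ ENNReal.ofNat_ne_top]
        simp only [← enorm_eq_nnnorm]
        rw [inv_pi_mul_lintegral_ball_sq_enorm_mul hf.continuousOn hv_meas, ← mul_assoc,
          ENNReal.ofReal_ofNat]
        norm_num

end
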